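/- Let F be a field of characteristic zero and P ∈ F[x_1,…,x_n] with the hypersurface P = 0 smooth, i.e., (P, ∂_1P, …, ∂_nP) is the unit ideal of F[x_1,…,x_n]. Let Ω be the complex of polynomial differential forms on F^n with the de Rham differential d, let Ω[P^{-1}] be the complex of forms with coefficients in the localization F[x_1,…,x_n][P^{-1}], with d extended by the quotient rule, and let Ω[P^{-1}]/Ω be the quotient complex. Then the degree-raising map Ω/(P,dP) → Ω[P^{-1}]/Ω given by ω ↦ ω̃∧dP/P (ω̃ a lift of ω) is a well-defined chain map and induces an isomorphism H^k(Ω/(P,dP)) ≅ H^{k+1}(Ω[P^{-1}]/Ω) for every k. -/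

import Mathlib

open MvPolynomial

noncomputable section

/-- Polynomial differential forms on `K^n`: a form assigns to each subset
`s ⊆ {1,…,n}` (the indices of `dx_{i_1} ∧ ⋯ ∧ dx_{i_k}` with `i_1 < ⋯ < i_k`)
a polynomial coefficient. -/
abbrev Form (n : ℕ) (K : Type*) [CommRing K] :=
  Finset (Fin n) → MvPolynomial (Fin n) K

/-- The sign `(-1)^{#{j ∈ s | j < i}}`. -/
def sgn {n : ℕ} (K : Type*) [CommRing K] (s : Finset (Fin n)) (i : Fin n) :
    MvPolynomial (Fin n) K :=
  (-1) ^ (s.filter (fun j => j < i)).card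

/-- The twisted de Rham differential `d_α ω = dω + α ∧ ω` associated to a
(closed) polynomial 1-form `α = Σ_i α_i dx_i`. -/
def dTwist {n : ℕ} {K : Type*} [CommRing K]
    (α : Fin n → MvPolynomial (Fin n) K) :
    Form n K →ₗ[K] Form n K where
  toFun ω := fun s => ∑ i ∈ s,
    sgn K s i * (pderiv i (ω (s.erase i)) + α i * ω (s.erase i))
  map_add' ω₁ ω₂ := by
    funext s
    simp only [Pi.add_apply]
    rw [← Finset.sum_add_distrib]
    refine Finset.sum_congr rfl fun i _ => ?_
    simp only [map_add]
    ring
  map_smul' c ω := by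
    funext s
    simp only [Pi.smul_apply, map_smul, RingHom.id_apply, Finset.smul_sum]
    refine Finset.sum_congr rfl fun i _ => ?_
    simp [mul_add, mul_smul_comm, smul_add, mul_assoc]

/-- The (untwisted) polynomial de Rham differential. -/
abbrev dRham (n : ℕ) (K : Type*) [CommRing K] : Form n K →ₗ[K] Form n K :=
  dTwist (fun _ => 0)

/-- Multiplication of a form by a 1-form `α`, `ω ↦ α ∧ ω`. -/
def wedge1 {n : ℕ} {K : Type*} [CommRing K]
    (α : Fin n → MvPolynomial (Fin n) K) :
    Form n K →ₗ[K] Form n K where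
  toFun ω := fun s => ∑ i ∈ s, sgn K s i * (α i * ω (s.erase i))
  map_add' ω₁ ω₂ := by
    funext s
    simp only [Pi.add_apply]
    rw [← Finset.sum_add_distrib]
    refine Finset.sum_congr rfl fun i _ => ?_
    ring
  map_smul' c ω := by
    funext s
    simp only [Pi.smul_apply, RingHom.id_apply, Finset.smul_sum]
    refine Finset.sum_congr rfl fun i _ => ?_
    simp [mul_smul_comm]

/-- Forms of pure degree `k`: those supported on index sets of cardinality `k`. -/
def formDeg (n : ℕ) (K : Type*) [CommRing K] (k : ℕ) : Submodule K (Form n K) where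
  carrier := {ω | ∀ s : Finset (Fin n), s.card ≠ k → ω s = 0}
  add_mem' := by
    intro a b ha hb s hs
    simp [Pi.add_apply, ha s hs, hb s hs]
  zero_mem' := fun s _ => rfl
  smul_mem' := by
    intro c a ha s hs
    simp [Pi.smul_apply, ha s hs]

/-- Degree-`k` cocycles of the twisted de Rham complex. -/
def cocycles {n : ℕ} {K : Type*} [CommRing K]
    (α : Fin n → MvPolynomial (Fin n) K) (k : ℕ) : Submodule K (Form n K) :=
  formDeg n K k ⊓ LinearMap.ker (dTwist α)

/-- Degree-`k` coboundaries of the twisted de Rham complex. -/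
def cobounds {n : ℕ} {K : Type*} [CommRing K]
    (α : Fin n → MvPolynomial (Fin n) K) (k : ℕ) : Submodule K (Form n K) :=
  Submodule.map (dTwist α) (formDeg n K (k - 1))

/-- The degree-`k` twisted de Rham cohomology of the 1-form `α`. -/
abbrev Htwist {n : ℕ} {K : Type*} [CommRing K]
    (α : Fin n → MvPolynomial (Fin n) K) (k : ℕ) :=
  (cocycles α k) ⧸ (Submodule.comap (cocycles α k).subtype (cobounds α k))

/-- The differential `df` of a polynomial, as the family of coefficients of the
1-form `Σ_i (∂f/∂x_i) dx_i`. -/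
def grad {n : ℕ} {K : Type*} [CommRing K] (f : MvPolynomial (Fin n) K) :
    Fin n → MvPolynomial (Fin n) K :=
  fun i => pderiv i f

/-- The twisted de Rham cohomology `H^k_f(K)` of a polynomial `f`. -/
abbrev Hf {n : ℕ} {K : Type*} [CommRing K] (f : MvPolynomial (Fin n) K) (k : ℕ) :=
  Htwist (grad f) k

/-- The top form `dx_1 ∧ ⋯ ∧ dx_n`. -/
def topForm (n : ℕ) (K : Type*) [CommRing K] : Form n K :=
  fun s => if s = Finset.univ then 1 else 0


/-- Multiplication of forms by the polynomial `P`, as a linear map. -/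
def mulForm {n : ℕ} {K : Type*} [CommRing K] (P : MvPolynomial (Fin n) K) :
    Form n K →ₗ[K] Form n K where
  toFun ω := fun s => P * ω s
  map_add' ω₁ ω₂ := by funext s; simp [Pi.add_apply, mul_add]
  map_smul' c ω := by funext s; simp [Pi.smul_apply, mul_smul_comm]

/-- The subcomplex `P·Ω + dP∧Ω` of the polynomial de Rham complex. -/
def relSub {n : ℕ} {K : Type*} [CommRing K] (P : MvPolynomial (Fin n) K) :
    Submodule K (Form n K) :=
  LinearMap.range (mulForm P) ⊔ LinearMap.range (wedge1 (grad P))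

/-- Degree-`k` cocycles of the quotient complex `Ω/(P,dP)`: degree-`k` forms
whose de Rham differential lies in `P·Ω + dP∧Ω`. -/
def relZ {n : ℕ} {K : Type*} [CommRing K] (P : MvPolynomial (Fin n) K)
    (k : ℕ) : Submodule K (Form n K) :=
  formDeg n K k ⊓ Submodule.comap (dRham n K) (relSub P)

/-- Degree-`k` coboundaries of the quotient complex `Ω/(P,dP)`. -/
def relB {n : ℕ} {K : Type*} [CommRing K] (P : MvPolynomial (Fin n) K)
    (k : ℕ) : Submodule K (Form n K) :=
  Submodule.map (dRham n K) (formDeg n K (k - 1)) ⊔ relSub P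

/-- The degree-`k` cohomology of the quotient complex `Ω/(P,dP)`, i.e. the
algebraic de Rham cohomology of the affine hypersurface `P = 0`. -/
abbrev relH {n : ℕ} {K : Type*} [CommRing K] (P : MvPolynomial (Fin n) K)
    (k : ℕ) :=
  (relZ P k) ⧸ (Submodule.comap (relZ P k).subtype (relB P k))

/-- The extension `ω̃` of a polynomial form on `K^n` to `K^{n+1}` (the lift
along the projection forgetting the last coordinate `t`). -/
def extForm {n : ℕ} {K : Type*} [CommRing K] (ω : Form n K) : Form (n + 1) K :=
  fun s' => ∑ s : Finset (Fin n),
    if s' = Finset.image Fin.castSucc s then rename Fin.castSucc (ω s) else 0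

/-- The coefficients of the 1-form `dt` on `K^{n+1}` (where `t` is the last
coordinate). -/
def dtForm (n : ℕ) (K : Type*) [CommRing K] :
    Fin (n + 1) → MvPolynomial (Fin (n + 1)) K :=
  fun i => if i = Fin.last n then 1 else 0

/-- The coefficients of the 1-form `dP` lifted to `K^{n+1}`. -/
def liftDP {n : ℕ} {K : Type*} [CommRing K] (P : MvPolynomial (Fin n) K) :
    Fin (n + 1) → MvPolynomial (Fin (n + 1)) K :=
  fun i => Fin.lastCases 0 (fun j => rename Fin.castSucc (pderiv j P)) i

/-- The map `ω ↦ ω̃ ∧ dP ∧ dt` from forms on `K^n` to forms on `K^{n+1}`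
(using `ω ∧ dP ∧ dt = −dt ∧ dP ∧ ω̃`). -/
def thetaMap {n : ℕ} {K : Type*} [CommRing K] (P : MvPolynomial (Fin n) K)
    (ω : Form n K) : Form (n + 1) K :=
  fun s' => -(wedge1 (dtForm n K) (wedge1 (liftDP P) (extForm ω)) s')

/-- The function `f(t,x) = t·P(x)` on `K^{n+1}`. -/
def tP {n : ℕ} {K : Type*} [CommRing K] (P : MvPolynomial (Fin n) K) :
    MvPolynomial (Fin (n + 1)) K :=
  X (Fin.last n) * rename Fin.castSucc P

section Localized

variable {F : Type*} [Field F] {n : ℕ}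
variable (Loc : Type*) [CommRing Loc] [Algebra (MvPolynomial (Fin n) F) Loc]
variable [Algebra F Loc] [IsScalarTower F (MvPolynomial (Fin n) F) Loc]

/-- Differential forms on `F^n` with coefficients in the localization
`F[x_1,…,x_n][P⁻¹]`. -/
abbrev FormLoc := Finset (Fin n) → Loc

/-- The de Rham differential on localized forms, extended from the polynomial
de Rham differential by the quotient rule, i.e. built from derivations `D_i`
on the localization extending the partial derivatives `∂_i`. -/
def dLoc (D : Fin n → Derivation F Loc Loc) :
    FormLoc (n := n) Loc →ₗ[F] FormLoc (n := n) Loc where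
  toFun ω := fun s => ∑ i ∈ s,
    ((-1 : Loc) ^ (s.filter (fun j => j < i)).card) * D i (ω (s.erase i))
  map_add' ω₁ ω₂ := by
    funext s
    simp only [Pi.add_apply, map_add, mul_add]
    rw [← Finset.sum_add_distrib]
  map_smul' c ω := by
    funext s
    simp only [Pi.smul_apply, RingHom.id_apply, Finset.smul_sum]
    refine Finset.sum_congr rfl fun i _ => ?_
    rw [Derivation.map_smul, mul_smul_comm]

/-- Localized forms of pure degree `k`. -/
def formDegLoc (k : ℕ) : Submodule F (FormLoc (n := n) Loc) where
  carrier := {ω | ∀ s : Finset (Fin n), s.card ≠ k → ω s = 0}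
  add_mem' := by
    intro a b ha hb s hs
    simp [Pi.add_apply, ha s hs, hb s hs]
  zero_mem' := fun s _ => rfl
  smul_mem' := by
    intro c a ha s hs
    simp [Pi.smul_apply, ha s hs]

/-- The inclusion of polynomial forms into localized forms. -/
def polyInc : Form n F →ₗ[F] FormLoc (n := n) Loc :=
  LinearMap.compLeft
    (IsScalarTower.toAlgHom F (MvPolynomial (Fin n) F) Loc).toLinearMap
    (Finset (Fin n))

/-- The submodule `Ω ⊆ Ω[P⁻¹]` of forms with polynomial coefficients. -/
def polySub : Submodule F (FormLoc (n := n) Loc) :=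
  LinearMap.range (polyInc Loc)

/-- Degree-`k` cocycles of the quotient complex `Ω[P⁻¹]/Ω`. -/
def locZ (D : Fin n → Derivation F Loc Loc) (k : ℕ) :
    Submodule F (FormLoc (n := n) Loc) :=
  formDegLoc Loc k ⊓ Submodule.comap (dLoc Loc D) (polySub Loc)

/-- Degree-`k` coboundaries of the quotient complex `Ω[P⁻¹]/Ω`. -/
def locB (D : Fin n → Derivation F Loc Loc) (k : ℕ) :
    Submodule F (FormLoc (n := n) Loc) :=
  Submodule.map (dLoc Loc D) (formDegLoc Loc (k - 1)) ⊔ polySub Loc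

/-- The degree-`k` cohomology of the quotient complex `Ω[P⁻¹]/Ω`. -/
abbrev locH (D : Fin n → Derivation F Loc Loc) (k : ℕ) :=
  (locZ Loc D k) ⧸ (Submodule.comap (locZ Loc D k).subtype (locB Loc D k))

/-- The element `1/P` of the localization. -/
def invP (P : MvPolynomial (Fin n) F) [IsLocalization.Away P Loc] : Loc :=
  IsLocalization.mk' Loc (1 : MvPolynomial (Fin n) F)
    (⟨P, ⟨1, pow_one P⟩⟩ : Submonoid.powers P)

/-- The map `ω ↦ ω̃ ∧ dP / P` on degree-`k` forms (with
`ω ∧ dP = (−1)^k dP ∧ ω`). -/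
def phiDeg (P : MvPolynomial (Fin n) F) [IsLocalization.Away P Loc] (k : ℕ)
    (ω : Form n F) : FormLoc (n := n) Loc :=
  fun s => ((-1 : F) ^ k) •
    (invP Loc P *
      algebraMap (MvPolynomial (Fin n) F) Loc (wedge1 (grad P) ω s))

end Localized

section Helpers

/-- Signed sum operator. -/
def gT {n : ℕ} {R : Type*} [CommRing R] (X : Fin n → R → R)
    (ω : Finset (Fin n) → R) : Finset (Fin n) → R :=
  fun s => ∑ i ∈ s, (-1 : R) ^ (s.filter (fun j => j < i)).card * X i (ω (s.erase i))

/-- Contraction with a vector field. -/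
def gI {n : ℕ} {R : Type*} [CommRing R] (b : Fin n → R)
    (ω : Finset (Fin n) → R) : Finset (Fin n) → R :=
  fun s => ∑ i ∈ sᶜ, (-1 : R) ^ (s.filter (fun j => j < i)).card * (b i * ω (insert i s))

theorem sgn_mul_self (R : Type*) [CommRing R] (m : ℕ) :
    (-1 : R) ^ m * (-1 : R) ^ m = 1 := by
  rw [← mul_pow]; simp

theorem card_filter_erase {n : ℕ} (s : Finset (Fin n)) (i j : Fin n) (hj : j ∈ s) :
    (s.filter (fun l => l < i)).card =
      ((s.erase j).filter (fun l => l < i)).card + if j < i then 1 else 0 := by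
  rw [Finset.filter_erase]
  split_ifs with h
  · rw [Finset.card_erase_add_one]
    simp [hj, h]
  · rw [Finset.erase_eq_of_notMem]
    · simp
    · simp [h]

theorem sign_swap {n : ℕ} (R : Type*) [CommRing R] (s : Finset (Fin n)) (i j : Fin n)
    (hi : i ∈ s) (hj : j ∈ s) (hij : i ≠ j) :
    (-1 : R) ^ (s.filter (fun l => l < i)).card *
        (-1 : R) ^ ((s.erase i).filter (fun l => l < j)).card =
      - ((-1 : R) ^ (s.filter (fun l => l < j)).card *
        (-1 : R) ^ ((s.erase j).filter (fun l => l < i)).card) := by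
  rw [card_filter_erase s i j hj, card_filter_erase s j i hi]
  rcases lt_or_gt_of_ne hij with h | h
  · simp [h, h.not_gt, pow_add]; ring
  · simp [h, h.not_gt, pow_add]; ring

theorem antisymm_sum {n : ℕ} {R : Type*} [CommRing R] (Z : Fin n → Fin n → R → R)
    (hZ : ∀ i j w, Z i j w = Z j i w) (ω : Finset (Fin n) → R) (s : Finset (Fin n)) :
    ∑ i ∈ s, ∑ j ∈ s.erase i, (-1 : R) ^ (s.filter (fun l => l < i)).card *
      ((-1 : R) ^ ((s.erase i).filter (fun l => l < j)).card *
        Z i j (ω ((s.erase i).erase j))) = 0 := by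
  rw [Finset.sum_sigma']
  refine Finset.sum_involution (fun a _ => ⟨a.2, a.1⟩) ?_ ?_ ?_ ?_
  · rintro ⟨i, j⟩ h
    simp only [Finset.mem_sigma, Finset.mem_erase] at h
    obtain ⟨hi, hji, hj⟩ := h
    simp only
    rw [← mul_assoc, ← mul_assoc, sign_swap R s i j hi hj (Ne.symm hji), hZ i j,
      Finset.erase_right_comm]
    ring
  · rintro ⟨i, j⟩ h _ h2
    simp only [Finset.mem_sigma, Finset.mem_erase] at h
    simp only [Sigma.mk.injEq] at h2
    exact h.2.1 h2.1
  · rintro ⟨i, j⟩ h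
    simp only [Finset.mem_sigma, Finset.mem_erase] at h ⊢
    exact ⟨h.2.2, Ne.symm h.2.1, h.1⟩
  · rintro ⟨i, j⟩ h
    rfl

theorem gT_gT {n : ℕ} {R : Type*} [CommRing R] (X Y : Fin n → R →+ R)
    (ω : Finset (Fin n) → R) (s : Finset (Fin n)) :
    gT (fun i => X i) (gT (fun i => Y i) ω) s =
    ∑ i ∈ s, ∑ j ∈ s.erase i, (-1 : R) ^ (s.filter (fun l => l < i)).card *
      ((-1 : R) ^ ((s.erase i).filter (fun l => l < j)).card *
        X i (Y j (ω ((s.erase i).erase j)))) := by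
  unfold gT
  refine Finset.sum_congr rfl fun i _ => ?_
  simp only
  rw [map_sum, Finset.mul_sum]
  refine Finset.sum_congr rfl fun j _ => ?_
  congr 1
  rcases neg_one_pow_eq_or R ((s.erase i).filter (fun l => l < j)).card with h | h <;> simp [h]

theorem gT_sq {n : ℕ} {R : Type*} [CommRing R] (X : Fin n → R →+ R)
    (h : ∀ i j w, X i (X j w) = X j (X i w)) (ω : Finset (Fin n) → R) :
    gT (fun i => X i) (gT (fun i => X i) ω) = 0 := by
  funext s
  rw [gT_gT]
  exact antisymm_sum (fun i j w => X i (X j w)) h ω s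

theorem gT_anti {n : ℕ} {R : Type*} [CommRing R] (X Y : Fin n → R →+ R)
    (h : ∀ i j w, X i (Y j w) + Y i (X j w) = X j (Y i w) + Y j (X i w))
    (ω : Finset (Fin n) → R) :
    gT (fun i => X i) (gT (fun i => Y i) ω) = - gT (fun i => Y i) (gT (fun i => X i) ω) := by
  rw [eq_neg_iff_add_eq_zero]
  funext s
  rw [Pi.add_apply, gT_gT, gT_gT]
  rw [Pi.zero_apply, ← antisymm_sum (fun i j w => X i (Y j w) + Y i (X j w)) h ω s]
  simp only [← Finset.sum_add_distrib]
  refine Finset.sum_congr rfl fun i _ => Finset.sum_congr rfl fun j _ => ?_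
  ring

/-- Cartan-type identity for contraction and exterior multiplication. -/
theorem gI_gT {n : ℕ} {R : Type*} [CommRing R] (α b : Fin n → R)
    (ω : Finset (Fin n) → R) :
    gI b (gT (fun i w => α i * w) ω) + gT (fun i w => α i * w) (gI b ω) =
      (∑ i, b i * α i) • ω := by
  funext s
  have h1 : gI b (gT (fun i w => α i * w) ω) s = ∑ i ∈ sᶜ, b i * α i * ω s +
      ∑ i ∈ sᶜ, ∑ j ∈ s, (-1 : R) ^ (s.filter (fun l => l < i)).card *
       (b i * ((-1 : R) ^ ((insert i s).filter (fun l => l < j)).card *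
        (α j * ω ((insert i s).erase j)))) := by
    unfold gI gT
    rw [← Finset.sum_add_distrib]
    refine Finset.sum_congr rfl fun i hi => ?_
    have hi' : i ∉ s := by simpa using hi
    rw [Finset.sum_insert hi', mul_add, mul_add, Finset.mul_sum, Finset.mul_sum]
    congr 1
    rw [Finset.erase_insert hi', Finset.filter_insert, if_neg (lt_irrefl i)]
    have := sgn_mul_self R (s.filter (fun l => l < i)).card
    linear_combination (b i * α i * ω s) * this
  have h2 : gT (fun i w => α i * w) (gI b ω) s = ∑ i ∈ s, b i * α i * ω s +
      ∑ j ∈ s, ∑ i ∈ sᶜ, (-1 : R) ^ (s.filter (fun l => l < j)).card *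
       (α j * ((-1 : R) ^ ((s.erase j).filter (fun l => l < i)).card *
        (b i * ω (insert i (s.erase j))))) := by
    unfold gI gT
    rw [← Finset.sum_add_distrib]
    refine Finset.sum_congr rfl fun j hj => ?_
    have hj' : j ∉ sᶜ := by simpa using hj
    simp only
    rw [Finset.compl_erase, Finset.sum_insert hj', mul_add, mul_add, Finset.mul_sum,
      Finset.mul_sum]
    congr 1
    rw [Finset.insert_erase hj, card_filter_erase s j j hj, if_neg (lt_irrefl j), add_zero]
    have := sgn_mul_self R ((s.erase j).filter (fun l => l < j)).card
    linear_combination (b j * α j * ω s) * this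
  rw [Pi.add_apply, h1, h2, Finset.sum_comm (s := s) (t := sᶜ)]
  rw [show ∀ a b c d : R, (a + b) + (c + d) = (c + a) + (b + d) by intros; ring]
  rw [Finset.sum_add_sum_compl, ← Finset.sum_add_distrib, Pi.smul_apply, smul_eq_mul,
    Finset.sum_mul, Finset.sum_eq_zero (s := sᶜ), add_zero]
  intro i hi
  rw [← Finset.sum_add_distrib]
  refine Finset.sum_eq_zero fun j hj => ?_
  have hi' : i ∉ s := by simpa using hi
  have hij : i ≠ j := fun h => hi' (h ▸ hj)
  have key := sign_swap R (insert i s) i j (by simp) (by simp [hj]) hij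
  rw [Finset.erase_insert hi', Finset.filter_insert, if_neg (lt_irrefl i)] at key
  have h3 : (insert i s).erase j = insert i (s.erase j) := Finset.erase_insert_of_ne hij
  have h4 : (insert i (s.erase j)).filter (fun l => l < i) =
      (s.erase j).filter (fun l => l < i) := by
    rw [Finset.filter_insert, if_neg (lt_irrefl i)]
  rw [h3, h4] at key
  rw [h3]
  have hB := sgn_mul_self R (s.filter (fun l => l < j)).card
  have hC := sgn_mul_self R ((insert i s).filter (fun l => l < j)).card
  generalize (-1 : R) ^ (s.filter (fun l => l < i)).card = A at *
  generalize (-1 : R) ^ (s.filter (fun l => l < j)).card = B at *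
  generalize (-1 : R) ^ ((insert i s).filter (fun l => l < j)).card = C at *
  generalize (-1 : R) ^ ((s.erase j).filter (fun l => l < i)).card = E at *
  generalize ω (insert i (s.erase j)) = w
  linear_combination (b i * α j * w) * (C * B * key - A * C * hB - B * E * hC)

theorem pderiv_comm' {n : ℕ} {K : Type*} [CommRing K] (i j : Fin n)
    (p : MvPolynomial (Fin n) K) : pderiv i (pderiv j p) = pderiv j (pderiv i p) := by
  have h : ⁅pderiv (R := K) i, pderiv (R := K) j⁆ = 0 := by
    apply MvPolynomial.derivation_ext
    intro l
    rw [Derivation.commutator_apply]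
    simp [pderiv_X, Pi.single_apply, apply_ite (pderiv (R := K) i), apply_ite (pderiv (R := K) j)]
  have := congrArg (fun E => E p) h
  simp only [Derivation.commutator_apply] at this
  simpa [sub_eq_zero] using this

section Poly

variable {n : ℕ} {F : Type*} [Field F]

theorem dRham_apply (ω : Form n F) (s : Finset (Fin n)) :
    dRham n F ω s = ∑ i ∈ s, (-1) ^ (s.filter (fun j => j < i)).card *
      pderiv i (ω (s.erase i)) := by
  simp [dTwist, sgn]

theorem wedge1_eq (α : Fin n → MvPolynomial (Fin n) F) (ω : Form n F) :
    wedge1 α ω = gT (fun i w => α i * w) ω := rfl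

theorem wedge1_wedge1 (α : Fin n → MvPolynomial (Fin n) F) (ω : Form n F) :
    wedge1 α (wedge1 α ω) = 0 := by
  refine gT_sq (fun i => AddMonoidHom.mulLeft (α i)) ?_ ω
  intro i j w
  simp; ring

theorem mulForm_eq (P : MvPolynomial (Fin n) F) (ω : Form n F) : mulForm P ω = P • ω := rfl

theorem wedge1_smul (α : Fin n → MvPolynomial (Fin n) F) (Q : MvPolynomial (Fin n) F)
    (ω : Form n F) : wedge1 α (Q • ω) = Q • wedge1 α ω := by
  funext s
  simp only [wedge1_eq, gT, Pi.smul_apply, smul_eq_mul, Finset.mul_sum]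
  refine Finset.sum_congr rfl fun i _ => ?_
  ring

/-- Strict degree condition: `ω` has degree `k - 1`, and vanishes if `k = 0`. -/
def predDeg {R : Type*} [CommRing R] (k : ℕ) (ω : Finset (Fin n) → R) : Prop :=
  ∀ s : Finset (Fin n), s.card + 1 ≠ k → ω s = 0

theorem gT_deg {R : Type*} [CommRing R] (X : Fin n → R → R) (hX : ∀ i, X i 0 = 0) (k : ℕ)
    (ω : Finset (Fin n) → R) (h : predDeg k ω) :
    ∀ s : Finset (Fin n), s.card ≠ k → gT X ω s = 0 := by
  intro s hs
  refine Finset.sum_eq_zero fun i hi => ?_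
  rw [h, hX, mul_zero]
  rwa [Finset.card_erase_add_one hi]

theorem gI_deg {R : Type*} [CommRing R] (b : Fin n → R) (k : ℕ)
    (ω : Finset (Fin n) → R) (h : ∀ s : Finset (Fin n), s.card ≠ k → ω s = 0) :
    predDeg k (gI b ω) := by
  intro s hs
  refine Finset.sum_eq_zero fun i hi => ?_
  rw [h, mul_zero, mul_zero]
  rwa [Finset.card_insert_of_notMem (by simpa using hi)]

theorem predDeg_succ {R : Type*} [CommRing R] (k : ℕ) (ω : Finset (Fin n) → R)
    (h : ∀ s : Finset (Fin n), s.card ≠ k → ω s = 0) : predDeg (k + 1) ω :=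
  fun s hs => h s (by omega)

theorem smooth_vf (P : MvPolynomial (Fin n) F)
    (hsmooth :
      Ideal.span ({P} ∪ Set.range fun i => pderiv i P) =
        (⊤ : Ideal (MvPolynomial (Fin n) F))) :
    ∃ (a : MvPolynomial (Fin n) F) (b : Fin n → MvPolynomial (Fin n) F),
      a * P + ∑ i, b i * grad P i = 1 := by
  have h1 : (1 : MvPolynomial (Fin n) F) ∈ Ideal.span ({P} ∪ Set.range fun i => pderiv i P) := by
    rw [hsmooth]; trivial
  rw [Ideal.span_union, Submodule.mem_sup] at h1
  obtain ⟨y, hy, z, hz, hyz⟩ := h1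
  obtain ⟨a, rfl⟩ := Ideal.mem_span_singleton'.1 hy
  obtain ⟨b, rfl⟩ := (Ideal.mem_span_range_iff_exists_fun).1 hz
  exact ⟨a, b, hyz⟩

theorem P_ne_zero (P : MvPolynomial (Fin n) F)
    (hsmooth :
      Ideal.span ({P} ∪ Set.range fun i => pderiv i P) =
        (⊤ : Ideal (MvPolynomial (Fin n) F))) : P ≠ 0 := by
  rintro rfl
  obtain ⟨a, b, h⟩ := smooth_vf _ hsmooth
  simp [grad] at h

/-- Koszul exactness modulo `P`. -/
theorem koszul_mod (P : MvPolynomial (Fin n) F)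
    (hsmooth :
      Ideal.span ({P} ∪ Set.range fun i => pderiv i P) =
        (⊤ : Ideal (MvPolynomial (Fin n) F)))
    (η μ : Form n F) (h : wedge1 (grad P) η = P • μ) :
    ∃ ξ ζ : Form n F, η = wedge1 (grad P) ξ + P • ζ ∧
      (∀ k, η ∈ formDeg n F k → predDeg k ξ ∧ ζ ∈ formDeg n F k) := by
  obtain ⟨a, b, hab⟩ := smooth_vf P hsmooth
  have hI := gI_gT (grad P) b η
  rw [← wedge1_eq, ← wedge1_eq, h] at hI
  have hs : gI b (P • μ) = P • gI b μ := by
    funext s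
    simp only [gI, Pi.smul_apply, smul_eq_mul, Finset.mul_sum]
    refine Finset.sum_congr rfl fun i _ => ?_
    ring
  have heq : η = wedge1 (grad P) (gI b η) + P • (gI b μ + a • η) := by
    rw [smul_add, ← hs, ← add_assoc, add_comm (wedge1 _ _), hI, smul_smul, ← add_smul]
    rw [show ∑ i, b i * grad P i + P * a = 1 by rw [← hab]; ring, one_smul]
  refine ⟨gI b η, _, heq, fun k hk => ⟨gI_deg b k η hk, ?_⟩⟩
  intro s hs
  have h1 := congrFun heq s
  rw [Pi.add_apply, hk s hs, wedge1_eq, gT_deg _ (by simp) k _ (gI_deg b k η hk) s hs, zero_add,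
    Pi.smul_apply, smul_eq_mul] at h1
  exact (mul_eq_zero.1 h1.symm).resolve_left (P_ne_zero P hsmooth)

theorem mem_relSub (P : MvPolynomial (Fin n) F) (ω : Form n F) :
    ω ∈ relSub P ↔ ∃ ξ ζ : Form n F, ω = wedge1 (grad P) ξ + P • ζ := by
  rw [relSub, Submodule.mem_sup]
  constructor
  · rintro ⟨_, ⟨ζ, rfl⟩, _, ⟨ξ, rfl⟩, rfl⟩
    exact ⟨ξ, ζ, add_comm _ _⟩
  · rintro ⟨ξ, ζ, rfl⟩
    exact ⟨_, ⟨ζ, rfl⟩, _, ⟨ξ, rfl⟩, add_comm _ _⟩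

end Poly

section LocHelp

variable {F : Type*} [Field F] {n : ℕ}
variable {Loc : Type*} [CommRing Loc] [Algebra (MvPolynomial (Fin n) F) Loc]
variable [Algebra F Loc] [IsScalarTower F (MvPolynomial (Fin n) F) Loc]

theorem polyInc_apply (ω : Form n F) (s : Finset (Fin n)) :
    polyInc Loc ω s = algebraMap (MvPolynomial (Fin n) F) Loc (ω s) := rfl

theorem polyInc_smul (Q : MvPolynomial (Fin n) F) (ω : Form n F) :
    polyInc Loc (Q • ω) = algebraMap (MvPolynomial (Fin n) F) Loc Q • polyInc Loc ω := by
  funext s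
  simp [polyInc_apply]

theorem mem_polySub (θ : FormLoc (n := n) Loc) :
    θ ∈ polySub (F := F) Loc ↔
      ∀ s, ∃ q : MvPolynomial (Fin n) F, algebraMap (MvPolynomial (Fin n) F) Loc q = θ s := by
  constructor
  · rintro ⟨ω, rfl⟩ s
    exact ⟨ω s, rfl⟩
  · intro h
    choose ω hω using h
    exact ⟨ω, funext hω⟩

theorem dLoc_eq (D : Fin n → Derivation F Loc Loc) (θ : FormLoc (n := n) Loc) :
    dLoc Loc D θ = gT (fun i w => D i w) θ := rfl

theorem dLoc_polyInc (D : Fin n → Derivation F Loc Loc)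
    (hD : ∀ (i : Fin n) (p : MvPolynomial (Fin n) F),
      D i (algebraMap (MvPolynomial (Fin n) F) Loc p) =
        algebraMap (MvPolynomial (Fin n) F) Loc (pderiv i p)) (ω : Form n F) :
    dLoc Loc D (polyInc Loc ω) = polyInc Loc (dRham n F ω) := by
  funext s
  rw [polyInc_apply, dRham_apply, dLoc_eq, gT, map_sum]
  refine Finset.sum_congr rfl fun i _ => ?_
  simp [polyInc_apply, hD]

theorem polyInc_wedge (α : Fin n → MvPolynomial (Fin n) F) (ω : Form n F) :
    polyInc Loc (wedge1 α ω) =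
      gT (fun i w => algebraMap (MvPolynomial (Fin n) F) Loc (α i) * w) (polyInc Loc ω) := by
  funext s
  rw [polyInc_apply, wedge1_eq, gT, gT, map_sum]
  refine Finset.sum_congr rfl fun i _ => ?_
  simp [polyInc_apply]

theorem invP_mul (P : MvPolynomial (Fin n) F) [IsLocalization.Away P Loc] :
    invP Loc P * algebraMap (MvPolynomial (Fin n) F) Loc P = 1 := by
  have := IsLocalization.mk'_spec Loc (1 : MvPolynomial (Fin n) F)
    (⟨P, ⟨1, pow_one P⟩⟩ : Submonoid.powers P)
  simpa [invP] using this

theorem derivation_zero (P : MvPolynomial (Fin n) F) [IsLocalization.Away P Loc]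
    (E : Derivation F Loc Loc)
    (hE : ∀ p, E (algebraMap (MvPolynomial (Fin n) F) Loc p) = 0) (x : Loc) : E x = 0 := by
  obtain ⟨⟨q, ⟨_, m, rfl⟩⟩, hx⟩ := IsLocalization.surj (Submonoid.powers P) x
  have h := congrArg E hx
  simp only [Derivation.leibniz, hE, smul_zero, zero_add] at h
  rw [smul_eq_mul] at h
  have hu : IsUnit (algebraMap (MvPolynomial (Fin n) F) Loc (P ^ m)) :=
    IsLocalization.map_units Loc (⟨P ^ m, m, rfl⟩ : Submonoid.powers P)
  exact (hu.mul_right_eq_zero).1 h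

variable (D : Fin n → Derivation F Loc Loc)

theorem dLoc_dLoc
    (hD : ∀ (i : Fin n) (p : MvPolynomial (Fin n) F),
      D i (algebraMap (MvPolynomial (Fin n) F) Loc p) =
        algebraMap (MvPolynomial (Fin n) F) Loc (pderiv i p))
    (P : MvPolynomial (Fin n) F) [IsLocalization.Away P Loc] (θ : FormLoc (n := n) Loc) :
    dLoc Loc D (dLoc Loc D θ) = 0 := by
  refine gT_sq (fun i => (D i : Loc →+ Loc)) ?_ θ
  intro i j w
  have := derivation_zero P ⁅D i, D j⁆ (by
    intro p
    rw [Derivation.commutator_apply, hD, hD, hD, hD, pderiv_comm', sub_self]) w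
  rw [Derivation.commutator_apply, sub_eq_zero] at this
  exact this

theorem dLoc_wedge
    (hD : ∀ (i : Fin n) (p : MvPolynomial (Fin n) F),
      D i (algebraMap (MvPolynomial (Fin n) F) Loc p) =
        algebraMap (MvPolynomial (Fin n) F) Loc (pderiv i p))
    (P : MvPolynomial (Fin n) F) (θ : FormLoc (n := n) Loc) :
    dLoc Loc D (gT (fun i w => algebraMap (MvPolynomial (Fin n) F) Loc (grad P i) * w) θ) =
    - gT (fun i w => algebraMap (MvPolynomial (Fin n) F) Loc (grad P i) * w) (dLoc Loc D θ) := by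
  refine gT_anti (fun i => (D i : Loc →+ Loc))
    (fun i => AddMonoidHom.mulLeft (algebraMap (MvPolynomial (Fin n) F) Loc (grad P i))) ?_ θ
  intro i j w
  have h1 : ∀ a b : Fin n, ((D a : Loc →+ Loc) : Loc → Loc) = D a := fun _ _ => rfl
  simp only [AddMonoidHom.coe_mulLeft]
  change D i (_ * w) + _ * D j w = D j (_ * w) + _ * D i w
  simp only [Derivation.leibniz, hD, smul_eq_mul, grad]
  rw [pderiv_comm' i j]
  ring

theorem D_inv
    (hD : ∀ (i : Fin n) (p : MvPolynomial (Fin n) F),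
      D i (algebraMap (MvPolynomial (Fin n) F) Loc p) =
        algebraMap (MvPolynomial (Fin n) F) Loc (pderiv i p))
    (P : MvPolynomial (Fin n) F) [IsLocalization.Away P Loc] (i : Fin n) (m : ℕ) :
    D i (invP Loc P ^ m) = - (m * invP Loc P ^ (m + 1)) *
      algebraMap (MvPolynomial (Fin n) F) Loc (grad P i) := by
  have h := invP_mul (Loc := Loc) P
  have h2 := congrArg (D i) h
  rw [Derivation.leibniz, hD, Derivation.map_one_eq_zero, smul_eq_mul, smul_eq_mul] at h2
  have h3 : D i (invP Loc P) = - invP Loc P ^ 2 *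
      algebraMap (MvPolynomial (Fin n) F) Loc (grad P i) := by
    unfold grad
    linear_combination invP Loc P * h2 - D i (invP Loc P) * h
  rcases m with _ | m
  · simp
  · rw [Derivation.leibniz_pow, h3]
    simp only [Nat.add_sub_cancel, nsmul_eq_mul, smul_eq_mul]
    ring

theorem dLoc_inv_smul
    (hD : ∀ (i : Fin n) (p : MvPolynomial (Fin n) F),
      D i (algebraMap (MvPolynomial (Fin n) F) Loc p) =
        algebraMap (MvPolynomial (Fin n) F) Loc (pderiv i p))
    (P : MvPolynomial (Fin n) F) [IsLocalization.Away P Loc] (m : ℕ) (θ : FormLoc (n := n) Loc) :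
    dLoc Loc D (invP Loc P ^ m • θ) = invP Loc P ^ m • dLoc Loc D θ -
      ((m : Loc) * invP Loc P ^ (m + 1)) •
        gT (fun i w => algebraMap (MvPolynomial (Fin n) F) Loc (grad P i) * w) θ := by
  funext s
  simp only [dLoc_eq, gT, Pi.sub_apply, Pi.smul_apply, smul_eq_mul, Finset.mul_sum,
    ← Finset.sum_sub_distrib]
  refine Finset.sum_congr rfl fun i _ => ?_
  rw [Derivation.leibniz, D_inv D hD P]
  simp only [smul_eq_mul]
  ring

theorem polyInc_injective (P : MvPolynomial (Fin n) F) [IsLocalization.Away P Loc]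
    (hP : P ≠ 0) : Function.Injective (polyInc (F := F) (n := n) Loc) := by
  intro a b h
  funext s
  have hinj : Function.Injective (algebraMap (MvPolynomial (Fin n) F) Loc) :=
    IsLocalization.injective Loc (powers_le_nonZeroDivisors_of_noZeroDivisors hP)
  exact hinj (congrFun h s)

theorem dLoc_inv_form
    (hD : ∀ (i : Fin n) (p : MvPolynomial (Fin n) F),
      D i (algebraMap (MvPolynomial (Fin n) F) Loc p) =
        algebraMap (MvPolynomial (Fin n) F) Loc (pderiv i p))
    (P : MvPolynomial (Fin n) F) [IsLocalization.Away P Loc] (m : ℕ) (η : Form n F) :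
    dLoc Loc D (invP Loc P ^ m • polyInc Loc η) = invP Loc P ^ m • polyInc Loc (dRham n F η) -
      (m : F) • (invP Loc P ^ (m + 1) • polyInc Loc (wedge1 (grad P) η)) := by
  rw [dLoc_inv_smul D hD, dLoc_polyInc D hD, polyInc_wedge, mul_smul]
  congr 1
  rw [Nat.cast_smul_eq_nsmul, Nat.cast_smul_eq_nsmul]

theorem dLoc_inv_wedge
    (hD : ∀ (i : Fin n) (p : MvPolynomial (Fin n) F),
      D i (algebraMap (MvPolynomial (Fin n) F) Loc p) =
        algebraMap (MvPolynomial (Fin n) F) Loc (pderiv i p))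
    (P : MvPolynomial (Fin n) F) [IsLocalization.Away P Loc] (ξ : Form n F) :
    dLoc Loc D (invP Loc P • polyInc Loc (wedge1 (grad P) ξ)) =
      - (invP Loc P • polyInc Loc (wedge1 (grad P) (dRham n F ξ))) := by
  have h := dLoc_inv_form D hD P 1 (wedge1 (grad P) ξ)
  rw [wedge1_wedge1, map_zero, smul_zero, smul_zero, sub_zero, pow_one, ← dLoc_polyInc D hD,
    polyInc_wedge, dLoc_wedge D hD, dLoc_polyInc D hD, ← polyInc_wedge, smul_neg,
    ← polyInc_wedge] at h
  exact h

theorem phiDeg_eq (P : MvPolynomial (Fin n) F) [IsLocalization.Away P Loc] (k : ℕ)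
    (ω : Form n F) : phiDeg Loc P k ω =
      ((-1 : F) ^ k) • (invP Loc P • polyInc Loc (wedge1 (grad P) ω)) := rfl

theorem invP_smul_cancel (P : MvPolynomial (Fin n) F) [IsLocalization.Away P Loc]
    (ω : Form n F) : invP Loc P • polyInc Loc (P • ω) = polyInc Loc ω := by
  rw [polyInc_smul, smul_smul, invP_mul, one_smul]

theorem phiDeg_relSub (P : MvPolynomial (Fin n) F) [IsLocalization.Away P Loc] (k : ℕ)
    (ω : Form n F) (h : ω ∈ relSub P) : phiDeg Loc P k ω ∈ polySub (F := F) Loc := by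
  obtain ⟨ξ, ζ, rfl⟩ := (mem_relSub P ω).1 h
  rw [phiDeg_eq, map_add, wedge1_wedge1, zero_add, wedge1_smul, invP_smul_cancel]
  exact Submodule.smul_mem _ _ ⟨_, rfl⟩

theorem dLoc_phiDeg
    (hD : ∀ (i : Fin n) (p : MvPolynomial (Fin n) F),
      D i (algebraMap (MvPolynomial (Fin n) F) Loc p) =
        algebraMap (MvPolynomial (Fin n) F) Loc (pderiv i p))
    (P : MvPolynomial (Fin n) F) [IsLocalization.Away P Loc] (k : ℕ) (ω : Form n F) :
    dLoc Loc D (phiDeg Loc P k ω) = phiDeg Loc P (k + 1) (dRham n F ω) := by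
  rw [phiDeg_eq, phiDeg_eq, map_smul, dLoc_inv_wedge D hD, pow_succ, mul_smul]
  simp

/-- If `dP ∧ η / P` is polynomial then `dP ∧ η` is divisible by `P`. -/
theorem div_of_inv (P : MvPolynomial (Fin n) F) [IsLocalization.Away P Loc] (hP : P ≠ 0)
    (η χ : Form n F) (h : invP Loc P • polyInc Loc η = polyInc Loc χ) : η = P • χ := by
  apply polyInc_injective (Loc := Loc) P hP
  rw [polyInc_smul, ← h, smul_smul, mul_comm, invP_mul, one_smul]

theorem pole_reduce [CharZero F]
    (hD : ∀ (i : Fin n) (p : MvPolynomial (Fin n) F),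
      D i (algebraMap (MvPolynomial (Fin n) F) Loc p) =
        algebraMap (MvPolynomial (Fin n) F) Loc (pderiv i p))
    (P : MvPolynomial (Fin n) F) [IsLocalization.Away P Loc]
    (hsmooth :
      Ideal.span ({P} ∪ Set.range fun i => pderiv i P) =
        (⊤ : Ideal (MvPolynomial (Fin n) F))) (k : ℕ) (m : ℕ) :
    ∀ (η : Form n F), η ∈ formDeg n F k → ∀ (κ : Form n F),
      dLoc Loc D (invP Loc P ^ m • polyInc Loc η) = invP Loc P • polyInc Loc κ →
      ∃ (β : FormLoc (n := n) Loc) (ξ ζ : Form n F), predDeg k β ∧ predDeg k ξ ∧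
        invP Loc P ^ m • polyInc Loc η =
          dLoc Loc D β + invP Loc P • polyInc Loc (wedge1 (grad P) ξ) + polyInc Loc ζ := by
  have hP := P_ne_zero P hsmooth
  induction m with
  | zero =>
    intro η hη κ _
    exact ⟨0, 0, η, fun _ _ => rfl, fun _ _ => rfl, by simp⟩
  | succ m ih =>
    intro η hη κ hκ
    have hm1 : ((m + 1 : ℕ) : F) ≠ 0 := Nat.cast_ne_zero.2 (Nat.succ_ne_zero m)
    have hup : invP Loc P * algebraMap (MvPolynomial (Fin n) F) Loc P = 1 := invP_mul P
    have hdiv : wedge1 (grad P) η =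
        P • (((m + 1 : ℕ) : F)⁻¹ • (dRham n F η - P ^ m • κ)) := by
      have h1 : ((m + 1 : ℕ) : F) • wedge1 (grad P) η = P • (dRham n F η - P ^ m • κ) := by
        apply polyInc_injective (Loc := Loc) P hP
        rw [dLoc_inv_form D hD] at hκ
        have h2 := congrArg
          (fun θ => (algebraMap (MvPolynomial (Fin n) F) Loc P) ^ (m + 2) • θ) hκ
        funext s
        have h3 := congrFun h2 s
        simp only [Pi.smul_apply, Pi.sub_apply, Pi.add_apply, smul_eq_mul, map_sub, map_smul,
          polyInc_smul, map_pow] at h3 ⊢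
        rw [Nat.cast_smul_eq_nsmul, nsmul_eq_mul] at h3 ⊢
        generalize polyInc Loc (wedge1 (grad P) η) s = A at *
        generalize polyInc Loc (dRham n F η) s = B at *
        generalize polyInc Loc κ s = C at *
        generalize algebraMap (MvPolynomial (Fin n) F) Loc P = p at *
        generalize invP Loc P = u at *
        have e1 : u ^ (m + 1) * p ^ (m + 1) = 1 := by rw [← mul_pow, hup, one_pow]
        have e2 : u ^ (m + 2) * p ^ (m + 2) = 1 := by rw [← mul_pow, hup, one_pow]
        have g1 : p ^ (m + 2) * (u ^ (m + 1) * B) = p * B := by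
          linear_combination (p * B) * e1
        have g2 : p ^ (m + 2) * (((m + 1 : ℕ) : Loc) * (u ^ (m + 1 + 1) * A)) =
            ((m + 1 : ℕ) : Loc) * A := by
          linear_combination (((m + 1 : ℕ) : Loc) * A) * e2
        have g3 : p ^ (m + 2) * (u * C) = p * (p ^ m * C) := by
          linear_combination (p ^ (m + 1) * C) * hup
        rw [mul_sub, g1, g2, g3] at h3
        linear_combination -h3
      rw [smul_comm, ← h1, smul_smul, inv_mul_cancel₀ hm1, one_smul]
    obtain ⟨ξ, ζ, hη', hdeg⟩ := koszul_mod P hsmooth η _ hdiv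
    obtain ⟨hξ, hζ⟩ := hdeg k hη
    have hsplit : invP Loc P ^ (m + 1) • polyInc Loc η =
        invP Loc P ^ (m + 1) • polyInc Loc (wedge1 (grad P) ξ) +
          invP Loc P ^ m • polyInc Loc ζ := by
      conv_lhs => rw [hη']
      rw [map_add, smul_add, pow_succ (invP Loc P) m, mul_smul _ _ (polyInc Loc (P • ζ)),
        invP_smul_cancel]
    rcases Nat.eq_zero_or_pos m with rfl | hmpos
    · refine ⟨0, ξ, ζ, fun _ _ => rfl, hξ, ?_⟩
      rw [hsplit]
      simp
    · have hm : (m : F) ≠ 0 := Nat.cast_ne_zero.2 hmpos.ne'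
      have hE := dLoc_inv_form D hD P m ξ
      set c : F := (m : F)⁻¹ with hc
      have hrew : invP Loc P ^ (m + 1) • polyInc Loc η =
          invP Loc P ^ m • polyInc Loc (ζ + c • dRham n F ξ) -
            dLoc Loc D (c • (invP Loc P ^ m • polyInc Loc ξ)) := by
        rw [hsplit, map_smul, hE, map_add, map_smul, smul_add, smul_sub, smul_smul c (m : F),
          hc, inv_mul_cancel₀ hm, one_smul, smul_comm (invP Loc P ^ m) ((m : F)⁻¹)]
        abel
      have hdeg' : ζ + c • dRham n F ξ ∈ formDeg n F k := by
        refine Submodule.add_mem _ hζ (Submodule.smul_mem _ _ ?_)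
        intro s hs
        rw [dRham_apply]
        exact gT_deg (fun i w => pderiv i w) (by simp) k ξ hξ s hs
      have hd' : dLoc Loc D (invP Loc P ^ m • polyInc Loc (ζ + c • dRham n F ξ)) =
          invP Loc P • polyInc Loc κ := by
        rw [← hκ, hrew, map_sub, dLoc_dLoc D hD P, sub_zero]
      obtain ⟨β, ξ', ζ', hβ, hξ', heq⟩ := ih _ hdeg' κ hd'
      refine ⟨β - c • (invP Loc P ^ m • polyInc Loc ξ), ξ', ζ', ?_, hξ', ?_⟩
      · intro s hs
        simp [hβ s hs, polyInc_apply, hξ s hs]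
      · rw [hrew, heq, map_sub]
        abel

/-- Clearing denominators in a form of degree `k`. -/
theorem exists_num (P : MvPolynomial (Fin n) F) [IsLocalization.Away P Loc] (hP : P ≠ 0)
    (k : ℕ) (θ : FormLoc (n := n) Loc) (hθ : θ ∈ formDegLoc (F := F) Loc k) :
    ∃ (m : ℕ) (η : Form n F), η ∈ formDeg n F k ∧ θ = invP Loc P ^ m • polyInc Loc η := by
  obtain ⟨⟨_, m, rfl⟩, hb⟩ := IsLocalization.exist_integer_multiples_of_finite
    (Submonoid.powers P) θ
  choose η hη' using hb
  have hη : ∀ s, algebraMap (MvPolynomial (Fin n) F) Loc (η s) =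
      algebraMap (MvPolynomial (Fin n) F) Loc P ^ m * θ s := by
    intro s
    rw [hη' s, Algebra.smul_def, ← map_pow]
  have hinj : Function.Injective (algebraMap (MvPolynomial (Fin n) F) Loc) :=
    IsLocalization.injective Loc (powers_le_nonZeroDivisors_of_noZeroDivisors hP)
  refine ⟨m, η, ?_, ?_⟩
  · intro s hs
    apply hinj
    rw [hη, hθ s hs, mul_zero, map_zero]
  · funext s
    rw [Pi.smul_apply, polyInc_apply, hη, smul_eq_mul, ← mul_assoc, ← mul_pow, invP_mul, one_pow,
      one_mul]

theorem pole_reduce' [CharZero F]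
    (hD : ∀ (i : Fin n) (p : MvPolynomial (Fin n) F),
      D i (algebraMap (MvPolynomial (Fin n) F) Loc p) =
        algebraMap (MvPolynomial (Fin n) F) Loc (pderiv i p))
    (P : MvPolynomial (Fin n) F) [IsLocalization.Away P Loc]
    (hsmooth :
      Ideal.span ({P} ∪ Set.range fun i => pderiv i P) =
        (⊤ : Ideal (MvPolynomial (Fin n) F))) (k : ℕ)
    (θ : FormLoc (n := n) Loc) (hθ : θ ∈ formDegLoc (F := F) Loc k) (κ : Form n F)
    (hκ : dLoc Loc D θ = invP Loc P • polyInc Loc κ) :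
      ∃ (β : FormLoc (n := n) Loc) (ξ ζ : Form n F), predDeg k β ∧ predDeg k ξ ∧
        θ = dLoc Loc D β + invP Loc P • polyInc Loc (wedge1 (grad P) ξ) + polyInc Loc ζ := by
  obtain ⟨m, η, hη, rfl⟩ := exists_num P (P_ne_zero P hsmooth) k θ hθ
  exact pole_reduce D hD P hsmooth k m η hη κ hκ

theorem mem_relSub_of_div (P : MvPolynomial (Fin n) F)
    (hsmooth :
      Ideal.span ({P} ∪ Set.range fun i => pderiv i P) =
        (⊤ : Ideal (MvPolynomial (Fin n) F)))
    (η μ : Form n F) (h : wedge1 (grad P) η = P • μ) : η ∈ relSub P := by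
  obtain ⟨ξ, ζ, h, -⟩ := koszul_mod P hsmooth η μ h
  exact (mem_relSub P η).2 ⟨ξ, ζ, h⟩

/-- `phiDeg` as a linear map. -/
def phiLin (P : MvPolynomial (Fin n) F) [IsLocalization.Away P Loc] (k : ℕ) :
    Form n F →ₗ[F] FormLoc (n := n) Loc where
  toFun := phiDeg Loc P k
  map_add' a b := by simp [phiDeg_eq, smul_add]
  map_smul' c a := by
    simp only [phiDeg_eq, map_smul, RingHom.id_apply]
    rw [smul_comm (invP Loc P) c, smul_comm ((-1 : F) ^ k) c]

theorem phiDeg_deg (P : MvPolynomial (Fin n) F) [IsLocalization.Away P Loc] (j k : ℕ)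
    (ω : Form n F) (hω : predDeg k ω) : phiDeg Loc P j ω ∈ formDegLoc (F := F) Loc k := by
  intro s hs
  have h := gT_deg (fun i w => grad P i * w) (by simp) k ω hω s hs
  rw [← wedge1_eq] at h
  simp [phiDeg, h]

theorem phi_mem_locZ
    (hD : ∀ (i : Fin n) (p : MvPolynomial (Fin n) F),
      D i (algebraMap (MvPolynomial (Fin n) F) Loc p) =
        algebraMap (MvPolynomial (Fin n) F) Loc (pderiv i p))
    (P : MvPolynomial (Fin n) F) [IsLocalization.Away P Loc] (k : ℕ)
    (ω : Form n F) (hω : ω ∈ relZ P k) : phiLin P k ω ∈ locZ Loc D (k + 1) := by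
  refine ⟨phiDeg_deg P k (k + 1) ω (predDeg_succ k ω hω.1), ?_⟩
  change dLoc Loc D (phiDeg Loc P k ω) ∈ polySub (F := F) Loc
  rw [dLoc_phiDeg D hD]
  exact phiDeg_relSub P _ _ hω.2

theorem phi_mem_locB
    (hD : ∀ (i : Fin n) (p : MvPolynomial (Fin n) F),
      D i (algebraMap (MvPolynomial (Fin n) F) Loc p) =
        algebraMap (MvPolynomial (Fin n) F) Loc (pderiv i p))
    (P : MvPolynomial (Fin n) F) [IsLocalization.Away P Loc] (k : ℕ)
    (ω : Form n F) (hω : ω ∈ relZ P k) (hB : ω ∈ relB P k) :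
    phiLin P k ω ∈ locB Loc D (k + 1) := by
  have hZ := phi_mem_locZ (Loc := Loc) D hD P k ω hω
  obtain ⟨_, ⟨f, hf, rfl⟩, r, hr, rfl⟩ := Submodule.mem_sup.1 hB
  have hr' : phiLin P k r ∈ polySub (F := F) Loc := phiDeg_relSub P k r hr
  rcases k with _ | k
  · refine Submodule.mem_sup_right ?_
    rw [mem_polySub]
    intro s
    by_cases hs : s.card = 0 + 1
    · obtain ⟨q, hq⟩ := (mem_polySub _).1 hr' s
      refine ⟨q, ?_⟩
      rw [map_add, Pi.add_apply, hq]
      have h0 : phiLin (Loc := Loc) P 0 (dRham n F f) s = 0 := by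
        refine phiDeg_deg P 0 2 (dRham n F f) (predDeg_succ 1 _ ?_) s (by omega)
        intro t ht
        rw [dRham_apply]
        exact gT_deg (fun i w => pderiv i w) (by simp) 1 f (predDeg_succ 0 f hf) t ht
      rw [h0, zero_add]
    · exact ⟨0, by rw [hZ.1 s hs, map_zero]⟩
  · rw [map_add]
    refine Submodule.add_mem _ (Submodule.mem_sup_left ?_) (Submodule.mem_sup_right hr')
    refine ⟨phiDeg Loc P k f, ?_, dLoc_phiDeg D hD P k f⟩
    exact phiDeg_deg P k (k + 1) f (predDeg_succ k f hf)

/-- The induced map in cohomology. -/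
def phiH
    (hD : ∀ (i : Fin n) (p : MvPolynomial (Fin n) F),
      D i (algebraMap (MvPolynomial (Fin n) F) Loc p) =
        algebraMap (MvPolynomial (Fin n) F) Loc (pderiv i p))
    (P : MvPolynomial (Fin n) F) [IsLocalization.Away P Loc] (k : ℕ) :
    relH P k →ₗ[F] locH Loc D (k + 1) :=
  Submodule.mapQ _ _ ((phiLin P k).restrict (phi_mem_locZ D hD P k))
    (fun ω hω => phi_mem_locB D hD P k ω.1 ω.2 hω)

theorem phiH_injective [CharZero F]
    (hD : ∀ (i : Fin n) (p : MvPolynomial (Fin n) F),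
      D i (algebraMap (MvPolynomial (Fin n) F) Loc p) =
        algebraMap (MvPolynomial (Fin n) F) Loc (pderiv i p))
    (P : MvPolynomial (Fin n) F) [IsLocalization.Away P Loc]
    (hsmooth :
      Ideal.span ({P} ∪ Set.range fun i => pderiv i P) =
        (⊤ : Ideal (MvPolynomial (Fin n) F))) (k : ℕ) :
    Function.Injective (phiH D hD P k) := by
  rw [injective_iff_map_eq_zero]
  intro x
  obtain ⟨ω, rfl⟩ := Submodule.Quotient.mk_surjective _ x
  intro hx
  have hx' : phiDeg Loc P k ω.1 ∈ locB Loc D (k + 1) := by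
    have h1 : (Submodule.Quotient.mk ((phiLin P k).restrict (phi_mem_locZ D hD P k) ω) :
      locH Loc D (k + 1)) = 0 := hx
    rw [Submodule.Quotient.mk_eq_zero] at h1
    exact h1
  rw [Submodule.Quotient.mk_eq_zero]
  change ω.1 ∈ relB P k
  obtain ⟨ω, hω⟩ := ω
  simp only at hx' ⊢
  obtain ⟨_, ⟨η, hη, rfl⟩, _, ⟨χ, rfl⟩, hsum⟩ := Submodule.mem_sup.1 hx'
  rw [phiDeg_eq] at hsum
  set ε : F := (-1) ^ k with hε
  have hεε : ε * ε = 1 := sgn_mul_self F k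
  obtain ⟨β, ξ, ζ, -, hξ, heq⟩ := pole_reduce' D hD P hsmooth k η hη
    (ε • wedge1 (grad P) ω - P • χ) (by
      rw [map_sub, smul_sub, invP_smul_cancel, map_smul, smul_comm (invP Loc P) ε, ← hsum]
      abel)
  have hd : dLoc Loc D η = - (invP Loc P • polyInc Loc (wedge1 (grad P) (dRham n F ξ))) +
      polyInc Loc (dRham n F ζ) := by
    rw [heq, map_add, map_add, dLoc_dLoc D hD P, zero_add, dLoc_inv_wedge D hD, dLoc_polyInc D hD]
  have hdiv : wedge1 (grad P) (ε • ω + dRham n F ξ) = P • (dRham n F ζ + χ) := by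
    apply div_of_inv (Loc := Loc) P (P_ne_zero P hsmooth)
    rw [map_add, map_smul, map_add, map_smul, smul_add, smul_comm (invP Loc P) ε, ← hsum, hd,
      map_add]
    abel
  have hmem := mem_relSub_of_div P hsmooth _ _ hdiv
  have hω' : ω = dRham n F (-(ε • ξ)) + ε • (ε • ω + dRham n F ξ) := by
    rw [map_neg, map_smul, smul_add, smul_smul, hεε, one_smul]
    abel
  rw [hω']
  refine Submodule.add_mem _ (Submodule.mem_sup_left ⟨_, ?_, rfl⟩)
    (Submodule.mem_sup_right (Submodule.smul_mem _ _ hmem))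
  refine Submodule.neg_mem _ (Submodule.smul_mem _ _ ?_)
  intro s hs
  exact hξ s (by omega)

theorem phiH_surjective [CharZero F]
    (hD : ∀ (i : Fin n) (p : MvPolynomial (Fin n) F),
      D i (algebraMap (MvPolynomial (Fin n) F) Loc p) =
        algebraMap (MvPolynomial (Fin n) F) Loc (pderiv i p))
    (P : MvPolynomial (Fin n) F) [IsLocalization.Away P Loc]
    (hsmooth :
      Ideal.span ({P} ∪ Set.range fun i => pderiv i P) =
        (⊤ : Ideal (MvPolynomial (Fin n) F))) (k : ℕ) :
    Function.Surjective (phiH D hD P k) := by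
  intro x
  obtain ⟨⟨θ, hθ⟩, rfl⟩ := Submodule.Quotient.mk_surjective _ x
  obtain ⟨χ, hχ⟩ := hθ.2
  obtain ⟨β, ξ, ζ, hβ, hξ, heq⟩ := pole_reduce' D hD P hsmooth (k + 1) θ hθ.1
    (P • χ) (by rw [invP_smul_cancel, hχ])
  set ε : F := (-1) ^ k with hε
  have hεε : ε * ε = 1 := sgn_mul_self F k
  have hξ' : ε • ξ ∈ relZ P k := by
    refine Submodule.smul_mem _ _ ⟨fun s hs => hξ s (by omega), ?_⟩
    refine mem_relSub_of_div P hsmooth _ (dRham n F ζ - χ) ?_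
    apply div_of_inv (Loc := Loc) P (P_ne_zero P hsmooth)
    rw [map_sub, hχ, heq, map_add, map_add, dLoc_dLoc D hD P, zero_add, dLoc_inv_wedge D hD,
      dLoc_polyInc D hD]
    abel
  refine ⟨Submodule.Quotient.mk ⟨ε • ξ, hξ'⟩, ?_⟩
  change (Submodule.Quotient.mk ((phiLin P k).restrict (phi_mem_locZ D hD P k) ⟨ε • ξ, hξ'⟩) :
      locH Loc D (k + 1)) = _
  rw [Submodule.Quotient.eq]
  change phiDeg Loc P k (ε • ξ) - θ ∈ locB Loc D (k + 1)
  have hfin : phiDeg Loc P k (ε • ξ) - θ = dLoc Loc D (-β) + polyInc Loc (-ζ) := by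
    rw [phiDeg_eq, ← hε, map_smul, map_smul, smul_comm (invP Loc P) ε, smul_smul, hεε, one_smul,
      map_neg, map_neg, heq]
    abel
  rw [hfin]
  refine Submodule.add_mem _ (Submodule.mem_sup_left ⟨_, ?_, rfl⟩)
    (Submodule.mem_sup_right ⟨_, rfl⟩)
  refine Submodule.neg_mem _ ?_
  intro s hs
  exact hβ s (by omega)

end LocHelp

end Helpers

/-- Let `F` be a field of characteristic zero and
`P ∈ F[x_1,…,x_n]` with the hypersurface `P = 0` smooth.  The degree-raising
map `Ω/(P,dP) → Ω[P⁻¹]/Ω`, `ω ↦ ω̃∧dP/P`, is a well-defined chain map and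
induces an isomorphism `H^k(Ω/(P,dP)) ≅ H^{k+1}(Ω[P⁻¹]/Ω)` for every `k`. -/
theorem hypersurface_cohomology_via_localization {F : Type*} [Field F]
    [CharZero F] {n : ℕ} (hn : 0 < n) (P : MvPolynomial (Fin n) F)
    (hsmooth :
      Ideal.span ({P} ∪ Set.range fun i => pderiv i P) =
        (⊤ : Ideal (MvPolynomial (Fin n) F)))
    (Loc : Type*) [CommRing Loc] [Algebra (MvPolynomial (Fin n) F) Loc]
    [Algebra F Loc] [IsScalarTower F (MvPolynomial (Fin n) F) Loc]
    [IsLocalization.Away P Loc]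
    (D : Fin n → Derivation F Loc Loc)
    (hD : ∀ (i : Fin n) (p : MvPolynomial (Fin n) F),
      D i (algebraMap (MvPolynomial (Fin n) F) Loc p) =
        algebraMap (MvPolynomial (Fin n) F) Loc (pderiv i p)) :
    (∀ k : ℕ, ∀ ω ∈ relSub P ⊓ formDeg n F k,
      phiDeg Loc P k ω ∈ polySub (F := F) Loc) ∧
    (∀ k : ℕ, ∀ ω ∈ formDeg n F k,
      (fun s => dLoc Loc D (phiDeg Loc P k ω) s -
        phiDeg Loc P (k + 1) (dRham n F ω) s) ∈ polySub (F := F) Loc) ∧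
    (∃ e : ∀ k : ℕ, (relH P k) ≃ₗ[F] locH Loc D (k + 1),
      ∀ (k : ℕ) (ω : relZ P k) (θ : locZ Loc D (k + 1)),
        (θ : FormLoc (n := n) Loc) = phiDeg Loc P k (ω : Form n F) →
          e k (Submodule.Quotient.mk ω) = Submodule.Quotient.mk θ) := by
  refine ⟨fun k ω hω => phiDeg_relSub P k ω hω.1, ?_, ?_⟩
  · intro k ω _
    have h : (fun s => dLoc Loc D (phiDeg Loc P k ω) s -
        phiDeg Loc P (k + 1) (dRham n F ω) s) = 0 := by
      funext s
      rw [dLoc_phiDeg D hD, sub_self, Pi.zero_apply]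
    rw [h]
    exact Submodule.zero_mem _
  · refine ⟨fun k => LinearEquiv.ofBijective (phiH D hD P k)
      ⟨phiH_injective D hD P hsmooth k, phiH_surjective D hD P hsmooth k⟩, ?_⟩
    rintro k ω ⟨θ, hθ⟩ h
    simp only at h
    subst h
    rfl

end
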